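/- (The cycloid solves the brachistochrone problem.) Let g > 0 and c > 0. Define F on (ℝ × ℝ) × (ℝ × ℝ), writing the variables as ((x, y), (ẋ, ẏ)), by F((x, y), (ẋ, ẏ)) := √((ẋ² + ẏ²)/(2·g·y)) (via the real square root; values for y ≤ 0 are irrelevant). Define the cycloid σ : ℝ → ℝ² by σ(θ) := (c·(θ − sin θ), c·(1 − cos θ)). Then for every θ ∈ (0, π) the Euler–Lagrange covector of F along σ vanishes: E(θ) = 0, where E(θ)(h) := (D_x(D_yF)(σ(θ), σ′(θ))(h))(σ′(θ)) − d/dθ [D_yF(σ(θ), σ′(θ))(h)]. In particular, along σ the momentum component ∂F/∂ẋ(σ(θ), σ′(θ)) is constant in θ, equal to 1/(2·√(g·c)). -/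

import Mathlib

/-- The Euler–Lagrange covector of a Lagrangian `F` on `(ℝ × ℝ) × (ℝ × ℝ)` along a curve
`σ : ℝ → ℝ × ℝ`, evaluated at parameter `θ` on the test vector `h`. -/
noncomputable def eulerLagrange
    (F : (ℝ × ℝ) × (ℝ × ℝ) → ℝ) (σ : ℝ → ℝ × ℝ) (θ : ℝ) (h : ℝ × ℝ) : ℝ :=
  (fderiv ℝ (fun x => fderiv ℝ (fun y => F (x, y)) (deriv σ θ)) (σ θ)) h (deriv σ θ)
    - deriv (fun s => fderiv ℝ (fun y => F (σ s, y)) (deriv σ s) h) θ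

/-!
The time of descent is the Euclidean length weighted by the reciprocal of the free-fall speed
`√(2gy)`. For such a product `φ(x) N(y)`, with `N` homogeneous of degree one, Euler's identity
`DN(v)(v) = N(v)` turns the Euler–Lagrange equation into Newton's law
`d/dθ (φ(σ) DN(σ')) = N(σ') Dφ(σ)`. On the cycloid `σ'₁ = σ₂ = y` and `|σ'|² = 2cy`, so the momentum
is `(1, cot (θ/2)) / (2√(gc))`, where `cot (θ/2) = sin θ / (1 - cos θ)`, and both its derivative and
the force are `(0, -1/(1 - cos θ)) / (2√(gc))`. All this holds away from the cusps `cos θ = 1`,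
the only zeros of the depth `y`.
-/

open Real

section Product

variable {𝕜 E E' : Type*} [NontriviallyNormedField 𝕜] [NormedAddCommGroup E] [NormedSpace 𝕜 E]
  [NormedAddCommGroup E'] [NormedSpace 𝕜 E']

theorem fderiv_fun_const_mul_field (a : 𝕜) (N : E → 𝕜) (v : E) :
    fderiv 𝕜 (fun y => a * N y) v = a • fderiv 𝕜 N v :=
  congrFun (fderiv_const_smul_field a) v

theorem fderiv_fderiv_fun_mul {φ : E → 𝕜} {x : E} (hφ : DifferentiableAt 𝕜 φ x) (N : E' → 𝕜)
    (v w : E') (h : E) :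
    fderiv 𝕜 (fun x => fderiv 𝕜 (fun y => φ x * N y) v) x h w =
      fderiv 𝕜 φ x h * fderiv 𝕜 N v w := by
  simp only [fderiv_fun_const_mul_field]
  rw [(hφ.hasFDerivAt.smul_const (fderiv 𝕜 N v)).fderiv]
  rfl

end Product

/-- The Euclidean length of a plane vector, spelled out because `‖v‖` on `ℝ × ℝ` is the sup norm. -/
noncomputable def euclideanLength (v : ℝ × ℝ) : ℝ := √(v.1 ^ 2 + v.2 ^ 2)

section EuclideanLength

variable {v : ℝ × ℝ}

theorem euclideanLength_sq (v : ℝ × ℝ) : euclideanLength v ^ 2 = v.1 ^ 2 + v.2 ^ 2 :=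
  sq_sqrt (by positivity)

theorem euclideanLength_pos (hv : v ≠ 0) : 0 < euclideanLength v := by
  rw [euclideanLength, sqrt_pos]
  by_contra! h
  exact hv (Prod.ext (by rw [Prod.fst_zero]; nlinarith [sq_nonneg v.2])
    (by rw [Prod.snd_zero]; nlinarith))

theorem fderiv_euclideanLength_apply (hv : v ≠ 0) (h : ℝ × ℝ) :
    fderiv ℝ euclideanLength v h = (v.1 * h.1 + v.2 * h.2) / euclideanLength v := by
  have hfst : HasFDerivAt Prod.fst (ContinuousLinearMap.fst ℝ ℝ ℝ) v := hasFDerivAt_fst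
  have hsnd : HasFDerivAt Prod.snd (ContinuousLinearMap.snd ℝ ℝ ℝ) v := hasFDerivAt_snd
  have hsq : HasFDerivAt (fun w : ℝ × ℝ => w.1 ^ 2 + w.2 ^ 2) _ v :=
    (hfst.pow 2).add (hsnd.pow 2)
  have hlength : HasFDerivAt euclideanLength _ v :=
    hsq.sqrt (sqrt_pos.1 (euclideanLength_pos hv)).ne'
  rw [hlength.fderiv]
  simp only [Nat.add_one_sub_one, pow_one, nsmul_eq_mul, Nat.cast_ofNat, smul_add, add_apply,
    smul_apply, ContinuousLinearMap.coe_fst', ContinuousLinearMap.coe_snd', smul_eq_mul,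
    euclideanLength]
  field_simp

theorem fderiv_euclideanLength_self (hv : v ≠ 0) :
    fderiv ℝ euclideanLength v v = euclideanLength v := by
  rw [fderiv_euclideanLength_apply hv, ← sq, ← sq, ← euclideanLength_sq, sq, mul_self_div_self]

end EuclideanLength

/-- The reciprocal `1 / √(2gy)` of the speed reached at depth `y` by a particle falling from rest.
It takes the junk value `0` where `g * y ≤ 0`. -/
noncomputable def fallSlowness (g : ℝ) (p : ℝ × ℝ) : ℝ := 1 / √(2 * g * p.2)

theorem hasFDerivAt_fallSlowness {g : ℝ} {p : ℝ × ℝ} (hp : 0 < g * p.2) :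
    HasFDerivAt (fallSlowness g)
      ((-fallSlowness g p / (2 * p.2)) • ContinuousLinearMap.snd ℝ ℝ ℝ) p := by
  have hpos : 0 < 2 * g * p.2 := by linarith
  have hg : g ≠ 0 := left_ne_zero_of_mul hp.ne'
  have hy : p.2 ≠ 0 := right_ne_zero_of_mul hp.ne'
  have hsqrt : HasDerivAt (fun y => √(2 * g * y)) (2 * g / (2 * √(2 * g * p.2))) p.2 :=
    (hasDerivAt_const_mul (2 * g)).sqrt hpos.ne'
  have hinv : HasDerivAt (fun y => 1 / √(2 * g * y)) (-fallSlowness g p / (2 * p.2)) p.2 := by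
    simp only [one_div]
    refine (hsqrt.fun_inv (sqrt_pos.2 hpos).ne').congr_deriv ?_
    rw [sq_sqrt hpos.le, fallSlowness]
    field_simp
  exact hinv.comp_hasFDerivAt p hasFDerivAt_snd

/-- The brachistochrone Finsler function: the time of descent per unit of parameter, at position
`q.1` with velocity `q.2`, under gravity `g` along the second axis. -/
noncomputable def descentTime (g : ℝ) (q : (ℝ × ℝ) × (ℝ × ℝ)) : ℝ :=
  √((q.2.1 ^ 2 + q.2.2 ^ 2) / (2 * g * q.1.2))

theorem descentTime_eq_mul (g : ℝ) :
    descentTime g = fun q => fallSlowness g q.1 * euclideanLength q.2 := by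
  funext q
  rw [descentTime, sqrt_div (by positivity), fallSlowness, euclideanLength, one_div_mul_eq_div]

/-- The cycloid traced by a point of a circle of radius `c`, starting from a cusp at the origin. -/
noncomputable def cycloid (c θ : ℝ) : ℝ × ℝ := (c * (θ - sin θ), c * (1 - cos θ))

section Cycloid

variable {g c θ : ℝ}

theorem hasDerivAt_one_sub_cos (θ : ℝ) : HasDerivAt (fun s => 1 - cos s) (sin θ) θ := by
  simpa only [neg_neg] using (hasDerivAt_cos θ).const_sub 1

theorem deriv_cycloid (c θ : ℝ) : deriv (cycloid c) θ = (c * (1 - cos θ), c * sin θ) :=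
  ((((hasDerivAt_id θ).sub (hasDerivAt_sin θ)).const_mul c).prodMk
    ((hasDerivAt_one_sub_cos θ).const_mul c)).deriv

theorem euclideanLength_deriv_cycloid_sq (c θ : ℝ) :
    euclideanLength (deriv (cycloid c) θ) ^ 2 = 2 * c * (cycloid c θ).2 := by
  rw [euclideanLength_sq, deriv_cycloid, cycloid]
  linear_combination c ^ 2 * sin_sq_add_cos_sq θ

theorem cycloid_snd_pos (hc : 0 < c) (hθ : cos θ < 1) : 0 < (cycloid c θ).2 :=
  mul_pos hc (sub_pos.2 hθ)

theorem deriv_cycloid_ne_zero (hc : 0 < c) (hθ : cos θ < 1) : deriv (cycloid c) θ ≠ 0 := by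
  rw [deriv_cycloid]
  exact fun h => (cycloid_snd_pos hc hθ).ne' (congrArg Prod.fst h)

theorem descentTime_cycloid (g : ℝ) (hc : 0 < c) (hθ : cos θ < 1) :
    descentTime g (cycloid c θ, deriv (cycloid c) θ) = c / √(g * c) := by
  have hy := cycloid_snd_pos hc hθ
  calc
    _ = √(2 * c * (cycloid c θ).2 / (2 * g * (cycloid c θ).2)) := by
      rw [descentTime, ← euclideanLength_sq, euclideanLength_deriv_cycloid_sq]
    _ = √(c ^ 2 / (g * c)) := by
      rw [mul_div_mul_right _ _ hy.ne', mul_div_mul_left _ _ two_ne_zero, sq,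
        mul_div_mul_right _ _ hc.ne']
    _ = c / √(g * c) := by rw [sqrt_div (sq_nonneg c), sqrt_sq hc.le]

theorem fderiv_descentTime_cycloid (g : ℝ) (hc : 0 < c) (hθ : cos θ < 1) (h : ℝ × ℝ) :
    fderiv ℝ (fun v => descentTime g (cycloid c θ, v)) (deriv (cycloid c) θ) h =
      (h.1 + sin θ / (1 - cos θ) * h.2) / (2 * √(g * c)) := by
  have hv := deriv_cycloid_ne_zero hc hθ
  have hlength := (euclideanLength_pos hv).ne'
  have hcos : 1 - cos θ ≠ 0 := (sub_pos.2 hθ).ne'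
  have htime := descentTime_cycloid g hc hθ
  simp only [descentTime_eq_mul] at htime ⊢
  rw [fderiv_fun_const_mul_field, smul_apply, smul_eq_mul, fderiv_euclideanLength_apply hv]
  calc
    _ = fallSlowness g (cycloid c θ) * euclideanLength (deriv (cycloid c) θ) *
          ((deriv (cycloid c) θ).1 * h.1 + (deriv (cycloid c) θ).2 * h.2) /
            euclideanLength (deriv (cycloid c) θ) ^ 2 := by field_simp
    _ = (h.1 + sin θ / (1 - cos θ) * h.2) / (2 * √(g * c)) := by
      rw [htime, euclideanLength_deriv_cycloid_sq, deriv_cycloid, cycloid]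
      field_simp

theorem fderiv_fderiv_descentTime_cycloid (hg : 0 < g) (hc : 0 < c) (hθ : cos θ < 1) (h : ℝ × ℝ) :
    fderiv ℝ (fun x => fderiv ℝ (fun v => descentTime g (x, v)) (deriv (cycloid c) θ))
        (cycloid c θ) h (deriv (cycloid c) θ) =
      -1 / (1 - cos θ) * h.2 / (2 * √(g * c)) := by
  have hslowness := hasFDerivAt_fallSlowness (mul_pos hg (cycloid_snd_pos hc hθ))
  have htime := descentTime_cycloid g hc hθ
  simp only [descentTime_eq_mul] at htime ⊢
  rw [fderiv_fderiv_fun_mul hslowness.differentiableAt, hslowness.fderiv,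
    fderiv_euclideanLength_self (deriv_cycloid_ne_zero hc hθ)]
  calc
    _ = -(fallSlowness g (cycloid c θ) * euclideanLength (deriv (cycloid c) θ)) /
          (2 * (cycloid c θ).2) * h.2 := by
      simp only [smul_apply, ContinuousLinearMap.coe_snd', smul_eq_mul]
      ring
    _ = -1 / (1 - cos θ) * h.2 / (2 * √(g * c)) := by
      rw [htime, cycloid]
      field_simp

theorem hasDerivAt_sin_div_one_sub_cos (hθ : cos θ ≠ 1) :
    HasDerivAt (fun s => sin s / (1 - cos s)) (-1 / (1 - cos θ)) θ := by
  have hcos : 1 - cos θ ≠ 0 := sub_ne_zero.2 hθ.symm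
  refine ((hasDerivAt_sin θ).fun_div (hasDerivAt_one_sub_cos θ) hcos).congr_deriv ?_
  field_simp
  linear_combination -sin_sq_add_cos_sq θ

theorem deriv_fderiv_descentTime_cycloid (g : ℝ) (hc : 0 < c) (hθ : cos θ < 1) (h : ℝ × ℝ) :
    deriv (fun s => fderiv ℝ (fun v => descentTime g (cycloid c s, v)) (deriv (cycloid c) s) h) θ =
      -1 / (1 - cos θ) * h.2 / (2 * √(g * c)) := by
  have hmomentum :
      (fun s => fderiv ℝ (fun v => descentTime g (cycloid c s, v)) (deriv (cycloid c) s) h)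
        =ᶠ[nhds θ] fun s => (h.1 + sin s / (1 - cos s) * h.2) / (2 * √(g * c)) := by
    filter_upwards [continuous_cos.continuousAt.eventually_lt_const hθ] with s hs
    exact fderiv_descentTime_cycloid g hc hs h
  rw [hmomentum.deriv_eq]
  exact ((((hasDerivAt_sin_div_one_sub_cos hθ.ne).mul_const h.2).const_add h.1).div_const _).deriv

end Cycloid

theorem cycloid_solves_brachistochrone_general {g c θ : ℝ} (hg : 0 < g) (hc : 0 < c)
    (hθ : cos θ ≠ 1) :
    (∀ h, eulerLagrange (descentTime g) (cycloid c) θ h = 0) ∧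
      fderiv ℝ (fun v => descentTime g (cycloid c θ, v)) (deriv (cycloid c) θ) (1, 0) =
        1 / (2 * √(g * c)) := by
  have hcos : cos θ < 1 := (cos_le_one θ).lt_of_ne hθ
  refine ⟨fun h => ?_, ?_⟩
  · rw [eulerLagrange, fderiv_fderiv_descentTime_cycloid hg hc hcos,
      deriv_fderiv_descentTime_cycloid g hc hcos, sub_self]
  · simp only [fderiv_descentTime_cycloid g hc hcos, mul_zero, add_zero]

/-- **The cycloid solves the brachistochrone problem.**  For the brachistochrone Finsler
function `F((x,y),(ẋ,ẏ)) = √((ẋ² + ẏ²)/(2gy))`, the cycloid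
`σ(θ) = (c(θ − sin θ), c(1 − cos θ))` satisfies the Euler–Lagrange equations for every
`θ ∈ (0, π)`, and along it the momentum `∂F/∂ẋ` is constant, equal to `1/(2√(gc))`. -/
theorem cycloid_solves_brachistochrone
    (g c : ℝ) (hg : 0 < g) (hc : 0 < c)
    (F : (ℝ × ℝ) × (ℝ × ℝ) → ℝ)
    (hFdef : ∀ (p v : ℝ × ℝ), F (p, v) = Real.sqrt ((v.1 ^ 2 + v.2 ^ 2) / (2 * g * p.2)))
    (σ : ℝ → ℝ × ℝ)
    (hσdef : ∀ θ : ℝ, σ θ = (c * (θ - Real.sin θ), c * (1 - Real.cos θ))) :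
    (∀ θ ∈ Set.Ioo (0 : ℝ) Real.pi, ∀ h : ℝ × ℝ, eulerLagrange F σ θ h = 0)
      ∧ (∀ θ ∈ Set.Ioo (0 : ℝ) Real.pi,
          fderiv ℝ (fun v => F (σ θ, v)) (deriv σ θ) ((1 : ℝ), (0 : ℝ)) =
            1 / (2 * Real.sqrt (g * c))) := by
  obtain rfl : F = descentTime g := funext fun q => hFdef q.1 q.2
  obtain rfl : σ = cycloid c := funext hσdef
  have hcos : ∀ θ ∈ Set.Ioo 0 π, cos θ ≠ 1 := fun θ hθ =>
    (cos_zero ▸ cos_lt_cos_of_nonneg_of_le_pi le_rfl hθ.2.le hθ.1).ne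
  exact ⟨fun θ hθ => (cycloid_solves_brachistochrone_general hg hc (hcos θ hθ)).1,
    fun θ hθ => (cycloid_solves_brachistochrone_general hg hc (hcos θ hθ)).2⟩
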